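/- The subgroups of the unit quaternion group defined below have the following orders: C_n has exactly n elements (for n ≥ 1), the binary dihedral group D*₄ₙ has exactly 4n elements (for n ≥ 2), the binary tetrahedral group T* has exactly 24 elements, the binary octahedral group O* has exactly 48 elements, and the binary icosahedral group I* has exactly 120 elements. -/

import Mathlib

open Quaternion
open scoped Quaternion

/-- The group of unit quaternions `S³`. -/
noncomputable abbrev UnitQuat : Type := Metric.sphere (0 : ℍ[ℝ]) 1

/-- The quaternion `cos(2π/n) + sin(2π/n) i`, a primitive `n`-th root of unity. -/
noncomputable def zetaQ (n : ℕ) : ℍ[ℝ] :=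
  ⟨Real.cos (2 * Real.pi / n), Real.sin (2 * Real.pi / n), 0, 0⟩

/-- The quaternion `i`. -/
def iQ : ℍ[ℝ] := ⟨0, 1, 0, 0⟩

/-- The quaternion `j`. -/
def jQ : ℍ[ℝ] := ⟨0, 0, 1, 0⟩

/-- The quaternion `ω = (1 + i + j + k)/2`. -/
noncomputable def omegaQ : ℍ[ℝ] := ⟨1/2, 1/2, 1/2, 1/2⟩

/-- The quaternion `(√2/2)(1 + j)`. -/
noncomputable def sigmaQ : ℍ[ℝ] := ⟨Real.sqrt 2 / 2, 0, Real.sqrt 2 / 2, 0⟩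

/-- The golden ratio `τ = (1 + √5)/2`. -/
noncomputable def tau : ℝ := (1 + Real.sqrt 5) / 2

/-- The quaternion `(τ⁻¹ + τ j + k)/2`. -/
noncomputable def iotaQ : ℍ[ℝ] := ⟨tau⁻¹ / 2, 0, tau / 2, 1 / 2⟩

/-- The cyclic subgroup `C_n` of the unit quaternions, generated by
`ζ_n = cos(2π/n) + sin(2π/n) i`. -/
noncomputable def CyclicQ (n : ℕ) : Subgroup UnitQuat :=
  Subgroup.closure {x : UnitQuat | (x : ℍ[ℝ]) = zetaQ n}

/-- The binary dihedral subgroup `D*₄ₙ` of the unit quaternions, generated by `ζ_{2n}`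
and `j`. -/
noncomputable def BinDihQ (n : ℕ) : Subgroup UnitQuat :=
  Subgroup.closure {x : UnitQuat | (x : ℍ[ℝ]) = zetaQ (2 * n) ∨ (x : ℍ[ℝ]) = jQ}

/-- The binary tetrahedral subgroup `T*` of the unit quaternions, generated by `i`, `j`
and `ω = (1 + i + j + k)/2`. -/
noncomputable def BinTetQ : Subgroup UnitQuat :=
  Subgroup.closure
    {x : UnitQuat | (x : ℍ[ℝ]) = iQ ∨ (x : ℍ[ℝ]) = jQ ∨ (x : ℍ[ℝ]) = omegaQ}

/-- The binary octahedral subgroup `O*` of the unit quaternions, generated by `T*` and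
`(√2/2)(1 + j)`. -/
noncomputable def BinOctQ : Subgroup UnitQuat :=
  Subgroup.closure ((BinTetQ : Set UnitQuat) ∪ {x : UnitQuat | (x : ℍ[ℝ]) = sigmaQ})

/-- The binary icosahedral subgroup `I*` of the unit quaternions, generated by `T*` and
`(τ⁻¹ + τ j + k)/2`. -/
noncomputable def BinIcoQ : Subgroup UnitQuat :=
  Subgroup.closure ((BinTetQ : Set UnitQuat) ∪ {x : UnitQuat | (x : ℍ[ℝ]) = iotaQ})

/-! All four noncyclic groups arise by adjoining one element `x` of prime order modulo `H` to a
subgroup `H`: `j` to `⟨ζ₂ₙ⟩` and `σ` to `T*` with `p = 2`, `ω` to `⟨i, j⟩` with `p = 3`, and `ι` to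
`T*` with `p = 5`. If the `p` cosets `xᵏH` are permuted by the generators of `H`, they form an orbit
of the new group on cosets of `H`, and the order is multiplied by `p`. For the first three `x`
normalizes `H`. For the icosahedral group `i` inverts `ι`, and `ω` fixes the cosets of `1` and `ι`
and permutes the other three. That `x ∉ H` is seen from the coordinates: they are integral on
`⟨i, j⟩` and rational on `T*`. -/

open MulAction Function
open scoped Pointwise

section Orbits

variable {G X : Type*} [Group G] [MulAction G X] {S : Set G} {x : G} {a : X}

theorem orbit_closure_subset {Y : Set X} (hY : Y.Finite) (ha : a ∈ Y)
    (hS : ∀ s ∈ S, ∀ y ∈ Y, s • y ∈ Y) : orbit (Subgroup.closure S) a ⊆ Y := by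
  have hle : Subgroup.closure S ≤ stabilizer G Y :=
    (Subgroup.closure_le _).2 fun s hs => (mem_stabilizer_set' hY).2 (hS s hs)
  rintro _ ⟨⟨g, hg⟩, rfl⟩
  exact (mem_stabilizer_set' hY).1 (hle hg) ha

theorem relIndex_stabilizer_eq_ncard_orbit (K : Subgroup G) (a : X) :
    (stabilizer G a).relIndex K = (orbit K a).ncard := by
  rw [← index_stabilizer]
  rfl

theorem ncard_orbit_zpowers (x : G) (a : X) :
    (orbit (Subgroup.zpowers x) a).ncard = minimalPeriod (x • ·) a := by
  rw [← Nat.card_coe_set_eq, Nat.card_congr (orbitZPowersEquiv x a), Nat.card_zmod]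

theorem orbit_closure_insert_eq_orbit_zpowers (hx : a ∈ periodicPts (x • ·))
    (hS : ∀ s ∈ S, ∀ k < minimalPeriod (x • ·) a, s • x ^ k • a ∈ orbit (Subgroup.zpowers x) a) :
    orbit (Subgroup.closure (insert x S)) a = orbit (Subgroup.zpowers x) a := by
  have hpos : 0 < minimalPeriod (x • ·) a := minimalPeriod_pos_of_mem_periodicPts hx
  have hfin : (orbit (Subgroup.zpowers x) a).Finite :=
    Set.finite_of_ncard_pos (by rwa [ncard_orbit_zpowers])
  refine (orbit_closure_subset hfin (mem_orbit_self a) ?_).antisymm ?_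
  · rintro s (rfl | hs) _ ⟨⟨_, m, rfl⟩, rfl⟩
    · exact ⟨⟨s ^ (1 + m), 1 + m, rfl⟩, by simp [zpow_add, mul_smul, Subgroup.smul_def]⟩
    · obtain ⟨k, hk⟩ := Int.eq_ofNat_of_zero_le (Int.emod_nonneg m (Int.natCast_pos.2 hpos).ne')
      have hlt : k < minimalPeriod (x • ·) a :=
        Int.ofNat_lt.1 (hk ▸ Int.emod_lt_of_pos m (Int.natCast_pos.2 hpos))
      have hmk : x ^ m • a = x ^ k • a := by
        rw [← zpow_smul_mod_minimalPeriod, hk, zpow_natCast]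
      simpa [Subgroup.smul_def, hmk] using hS s hs k hlt
  · rintro _ ⟨⟨g, hg⟩, rfl⟩
    have hle : Subgroup.zpowers x ≤ Subgroup.closure (insert x S) := by
      simpa using Subgroup.subset_closure (Set.mem_insert x S)
    exact ⟨⟨g, hle hg⟩, rfl⟩

theorem relIndex_stabilizer_closure_insert (hx : a ∈ periodicPts (x • ·))
    (hS : ∀ s ∈ S, ∀ k < minimalPeriod (x • ·) a, s • x ^ k • a ∈ orbit (Subgroup.zpowers x) a) :
    (stabilizer G a).relIndex (Subgroup.closure (insert x S)) = minimalPeriod (x • ·) a := by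
  rw [relIndex_stabilizer_eq_ncard_orbit, orbit_closure_insert_eq_orbit_zpowers hx hS,
    ncard_orbit_zpowers]

end Orbits

section AdjoinElement

variable {G : Type*} [Group G] {S : Set G} {x : G} {p : ℕ} [Fact p.Prime]

theorem card_closure_insert_of_prime (hxp : x ^ p ∈ Subgroup.closure S)
    (hx : x ∉ Subgroup.closure S)
    (hS : ∀ s ∈ S, ∀ k < p, ∃ l : ℕ, ∃ h ∈ Subgroup.closure S, s * x ^ k = x ^ l * h) :
    Nat.card (Subgroup.closure (insert x S)) = p * Nat.card (Subgroup.closure S) := by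
  set H := Subgroup.closure S
  let a : G ⧸ H := (1 : G)
  have hstab : stabilizer G a = H := stabilizer_quotient H
  have hsmul (g : G) : g • a = a ↔ g ∈ H := by
    rw [← mem_stabilizer_iff, hstab]
  have hper : IsPeriodicPt (x • ·) p a := by
    rw [IsPeriodicPt, IsFixedPt, smul_iterate_apply]
    exact (hsmul _).2 hxp
  have hmin : minimalPeriod (x • ·) a = p :=
    minimalPeriod_eq_prime hper fun hfix => hx ((hsmul x).1 hfix)
  have hindex : H.relIndex (Subgroup.closure (insert x S)) = p := by
    rw [← hstab]
    refine (relIndex_stabilizer_closure_insert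
      (mk_mem_periodicPts (Fact.out : p.Prime).pos hper) fun s hs k hk => ?_).trans hmin
    obtain ⟨l, h, hh, hskl⟩ := hS s hs k (hmin ▸ hk)
    refine ⟨⟨x ^ l, l, zpow_natCast x l⟩, ?_⟩
    rw [← mul_smul, hskl, mul_smul, (hsmul h).2 hh]
    rfl
  rw [← Subgroup.relIndex_bot_left, ← Subgroup.relIndex_mul_relIndex ⊥ H _ bot_le
    (Subgroup.closure_mono (Set.subset_insert x S)), hindex, Subgroup.relIndex_bot_left, mul_comm]

theorem exists_mul_pow_eq_pow_mul {H : Subgroup G} (hH : ∀ h ∈ H, ∃ t ∈ H, h * x = x * t)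
    (k : ℕ) : ∀ h ∈ H, ∃ t ∈ H, h * x ^ k = x ^ k * t := by
  induction k with
  | zero => exact fun h hh => ⟨h, hh, by simp⟩
  | succ k ih =>
    intro h hh
    obtain ⟨t, ht, hht⟩ := ih h hh
    obtain ⟨u, hu, htu⟩ := hH t ht
    exact ⟨u, hu, by rw [pow_succ, ← mul_assoc, hht, mul_assoc, htu, mul_assoc]⟩

theorem card_closure_insert_of_normalizing (hxp : x ^ p ∈ Subgroup.closure S)
    (hx : x ∉ Subgroup.closure S) (hS : ∀ s ∈ S, ∃ t ∈ Subgroup.closure S, s * x = x * t) :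
    Nat.card (Subgroup.closure (insert x S)) = p * Nat.card (Subgroup.closure S) := by
  have hle : Subgroup.closure S ≤ (Subgroup.closure S).map (MulAut.conj x).toMonoidHom := by
    refine (Subgroup.closure_le _).2 fun s hs => ?_
    obtain ⟨t, ht, hst⟩ := hS s hs
    exact ⟨t, ht, by simp [← hst]⟩
  have hH : ∀ h ∈ Subgroup.closure S, ∃ t ∈ Subgroup.closure S, h * x = x * t := fun h hh => by
    obtain ⟨t, ht, rfl⟩ := hle hh
    exact ⟨t, ht, by simp⟩
  refine card_closure_insert_of_prime hxp hx fun s hs k _ => ⟨k, ?_⟩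
  exact exists_mul_pow_eq_pow_mul hH k s (Subgroup.subset_closure hs)

end AdjoinElement

section UnitQuaternions

theorem mem_unitSphere_of_sq_sum_eq_one {z : ℍ[ℝ]}
    (h : z.re ^ 2 + z.imI ^ 2 + z.imJ ^ 2 + z.imK ^ 2 = 1) :
    z ∈ Metric.sphere (0 : ℍ[ℝ]) 1 := by
  rw [mem_sphere_zero_iff_norm, ← sq_eq_sq₀ (norm_nonneg z) zero_le_one, sq,
    ← Quaternion.normSq_eq_norm_mul_self, Quaternion.normSq_def', h, one_pow]

theorem coords_mul (x y : UnitQuat) :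
    ((x * y : UnitQuat) : ℍ[ℝ]).re = (x : ℍ[ℝ]).re * (y : ℍ[ℝ]).re -
      (x : ℍ[ℝ]).imI * (y : ℍ[ℝ]).imI - (x : ℍ[ℝ]).imJ * (y : ℍ[ℝ]).imJ -
      (x : ℍ[ℝ]).imK * (y : ℍ[ℝ]).imK ∧
    ((x * y : UnitQuat) : ℍ[ℝ]).imI = (x : ℍ[ℝ]).re * (y : ℍ[ℝ]).imI +
      (x : ℍ[ℝ]).imI * (y : ℍ[ℝ]).re + (x : ℍ[ℝ]).imJ * (y : ℍ[ℝ]).imK -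
      (x : ℍ[ℝ]).imK * (y : ℍ[ℝ]).imJ ∧
    ((x * y : UnitQuat) : ℍ[ℝ]).imJ = (x : ℍ[ℝ]).re * (y : ℍ[ℝ]).imJ -
      (x : ℍ[ℝ]).imI * (y : ℍ[ℝ]).imK + (x : ℍ[ℝ]).imJ * (y : ℍ[ℝ]).re +
      (x : ℍ[ℝ]).imK * (y : ℍ[ℝ]).imI ∧
    ((x * y : UnitQuat) : ℍ[ℝ]).imK = (x : ℍ[ℝ]).re * (y : ℍ[ℝ]).imK +
      (x : ℍ[ℝ]).imI * (y : ℍ[ℝ]).imJ - (x : ℍ[ℝ]).imJ * (y : ℍ[ℝ]).imI +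
      (x : ℍ[ℝ]).imK * (y : ℍ[ℝ]).re := by
  simp

theorem coords_inv (x : UnitQuat) :
    ((x⁻¹ : UnitQuat) : ℍ[ℝ]).re = (x : ℍ[ℝ]).re ∧
    ((x⁻¹ : UnitQuat) : ℍ[ℝ]).imI = -(x : ℍ[ℝ]).imI ∧
    ((x⁻¹ : UnitQuat) : ℍ[ℝ]).imJ = -(x : ℍ[ℝ]).imJ ∧
    ((x⁻¹ : UnitQuat) : ℍ[ℝ]).imK = -(x : ℍ[ℝ]).imK := by
  have hx : Quaternion.normSq (x : ℍ[ℝ]) = 1 := by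
    rw [Quaternion.normSq_eq_norm_mul_self, mem_sphere_zero_iff_norm.1 x.2, one_mul]
  have hstar : ((x⁻¹ : UnitQuat) : ℍ[ℝ]) = star (x : ℍ[ℝ]) := by
    rw [Metric.unitSphere.coe_inv, Quaternion.inv_def, hx, inv_one, one_smul]
  simp [hstar, -Metric.unitSphere.coe_inv]

theorem setOf_coe_eq {z : ℍ[ℝ]} {u : UnitQuat} (hu : (u : ℍ[ℝ]) = z) :
    {x : UnitQuat | (x : ℍ[ℝ]) = z} = {u} := by
  ext x
  simp [← hu, Subtype.coe_inj]

/-- The subgroup of unit quaternions all of whose coordinates lie in the subring `R`. -/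
def unitsWithCoordsIn (R : Subring ℝ) : Subgroup UnitQuat where
  carrier := {x | (x : ℍ[ℝ]).re ∈ R ∧ (x : ℍ[ℝ]).imI ∈ R ∧ (x : ℍ[ℝ]).imJ ∈ R ∧
    (x : ℍ[ℝ]).imK ∈ R}
  one_mem' := by simp [R.one_mem, R.zero_mem]
  mul_mem' := by
    rintro x y ⟨hx, hxi, hxj, hxk⟩ ⟨hy, hyi, hyj, hyk⟩
    simp only [Set.mem_ofPred_eq, coords_mul, sub_eq_add_neg]
    refine ⟨?_, ?_, ?_, ?_⟩ <;> apply_rules [R.add_mem, R.neg_mem, R.mul_mem]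
  inv_mem' := by
    rintro x ⟨hx, hxi, hxj, hxk⟩
    simp only [Set.mem_ofPred_eq, coords_inv]
    exact ⟨hx, R.neg_mem hxi, R.neg_mem hxj, R.neg_mem hxk⟩

theorem mem_unitsWithCoordsIn {R : Subring ℝ} {x : UnitQuat} : x ∈ unitsWithCoordsIn R ↔
    (x : ℍ[ℝ]).re ∈ R ∧ (x : ℍ[ℝ]).imI ∈ R ∧ (x : ℍ[ℝ]).imJ ∈ R ∧ (x : ℍ[ℝ]).imK ∈ R :=
  Iff.rfl

theorem tau_sq : tau ^ 2 = tau + 1 := Real.goldenRatio_sq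

theorem tau_inv : tau⁻¹ = tau - 1 := by
  rw [inv_eq_of_mul_eq_one_right]
  linear_combination tau_sq

/-- The element `i` of the group of unit quaternions. -/
def unitI : UnitQuat := ⟨iQ, mem_unitSphere_of_sq_sum_eq_one (by simp [iQ])⟩

/-- The element `j` of the group of unit quaternions. -/
def unitJ : UnitQuat := ⟨jQ, mem_unitSphere_of_sq_sum_eq_one (by simp [jQ])⟩

/-- The generator `ω` of the binary tetrahedral group as an element of the group of unit
quaternions. -/
noncomputable def unitOmega : UnitQuat :=
  ⟨omegaQ, mem_unitSphere_of_sq_sum_eq_one (by norm_num [omegaQ])⟩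

/-- The generator `σ = (√2/2)(1 + j)` of the binary octahedral group as an element of the group
of unit quaternions. -/
noncomputable def unitSigma : UnitQuat :=
  ⟨sigmaQ, mem_unitSphere_of_sq_sum_eq_one (by norm_num [sigmaQ, div_pow])⟩

/-- The generator `ι = (τ⁻¹ + τ j + k)/2` of the binary icosahedral group as an element of the
group of unit quaternions. -/
noncomputable def unitIota : UnitQuat :=
  ⟨iotaQ, mem_unitSphere_of_sq_sum_eq_one (by
    simp only [iotaQ, tau_inv]
    linear_combination tau_sq / 2)⟩

@[simp] theorem coords_unitI : (unitI : ℍ[ℝ]).re = 0 ∧ (unitI : ℍ[ℝ]).imI = 1 ∧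
    (unitI : ℍ[ℝ]).imJ = 0 ∧ (unitI : ℍ[ℝ]).imK = 0 :=
  ⟨rfl, rfl, rfl, rfl⟩

@[simp] theorem coords_unitJ : (unitJ : ℍ[ℝ]).re = 0 ∧ (unitJ : ℍ[ℝ]).imI = 0 ∧
    (unitJ : ℍ[ℝ]).imJ = 1 ∧ (unitJ : ℍ[ℝ]).imK = 0 :=
  ⟨rfl, rfl, rfl, rfl⟩

@[simp] theorem coords_unitOmega : (unitOmega : ℍ[ℝ]).re = 1 / 2 ∧ (unitOmega : ℍ[ℝ]).imI = 1 / 2 ∧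
    (unitOmega : ℍ[ℝ]).imJ = 1 / 2 ∧ (unitOmega : ℍ[ℝ]).imK = 1 / 2 :=
  ⟨rfl, rfl, rfl, rfl⟩

@[simp] theorem coords_unitSigma : (unitSigma : ℍ[ℝ]).re = √2 / 2 ∧ (unitSigma : ℍ[ℝ]).imI = 0 ∧
    (unitSigma : ℍ[ℝ]).imJ = √2 / 2 ∧ (unitSigma : ℍ[ℝ]).imK = 0 :=
  ⟨rfl, rfl, rfl, rfl⟩

@[simp] theorem coords_unitIota : (unitIota : ℍ[ℝ]).re = (tau - 1) / 2 ∧ (unitIota : ℍ[ℝ]).imI = 0 ∧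
    (unitIota : ℍ[ℝ]).imJ = tau / 2 ∧ (unitIota : ℍ[ℝ]).imK = 1 / 2 :=
  ⟨congrArg (· / 2) tau_inv, rfl, rfl, rfl⟩

theorem unitOmega_pow_three : unitOmega ^ 3 = unitJ ^ 2 := by
  rw [pow_succ, sq, sq]
  ext <;> simp only [coords_mul, coords_unitOmega, coords_unitJ] <;> ring

theorem unitI_mul_unitOmega : unitI * unitOmega = unitOmega * (unitI * unitJ) := by
  ext <;> simp only [coords_mul, coords_unitI, coords_unitOmega, coords_unitJ] <;> ring

theorem unitJ_mul_unitOmega : unitJ * unitOmega = unitOmega * unitI := by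
  ext <;> simp only [coords_mul, coords_unitJ, coords_unitOmega, coords_unitI] <;> ring

theorem unitSigma_sq : unitSigma ^ 2 = unitJ := by
  rw [sq]
  ext <;> simp only [coords_mul, coords_unitSigma, coords_unitJ]
  · ring
  · ring
  · linear_combination Real.sq_sqrt zero_le_two / 2
  · ring

theorem unitI_mul_unitSigma : unitI * unitSigma = unitSigma * (unitI * unitJ) := by
  ext <;> simp only [coords_mul, coords_unitI, coords_unitSigma, coords_unitJ] <;> ring

theorem unitOmega_mul_unitSigma :
    unitOmega * unitSigma = unitSigma * (unitJ * unitOmega⁻¹) := by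
  ext <;> simp only [coords_mul, coords_inv, coords_unitOmega, coords_unitSigma, coords_unitJ] <;>
    ring

theorem coords_unitIota_sq : ((unitIota ^ 2 : UnitQuat) : ℍ[ℝ]).re = -tau / 2 ∧
    ((unitIota ^ 2 : UnitQuat) : ℍ[ℝ]).imI = 0 ∧
    ((unitIota ^ 2 : UnitQuat) : ℍ[ℝ]).imJ = 1 / 2 ∧
    ((unitIota ^ 2 : UnitQuat) : ℍ[ℝ]).imK = (tau - 1) / 2 := by
  simp only [sq, coords_mul, coords_unitIota]
  refine ⟨?_, ?_, ?_, ?_⟩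
  · ring
  · ring
  · linear_combination tau_sq / 2
  · ring

theorem coords_unitIota_pow_three : ((unitIota ^ 3 : UnitQuat) : ℍ[ℝ]).re = -tau / 2 ∧
    ((unitIota ^ 3 : UnitQuat) : ℍ[ℝ]).imI = 0 ∧
    ((unitIota ^ 3 : UnitQuat) : ℍ[ℝ]).imJ = -1 / 2 ∧
    ((unitIota ^ 3 : UnitQuat) : ℍ[ℝ]).imK = (1 - tau) / 2 := by
  simp only [pow_succ _ 2, coords_mul, coords_unitIota, coords_unitIota_sq]
  refine ⟨?_, ?_, ?_, ?_⟩
  · linear_combination -tau_sq / 4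
  · linear_combination -tau_sq / 4
  · linear_combination -tau_sq / 4
  · linear_combination tau_sq / 4

theorem unitIota_pow_four : unitIota ^ 4 = unitIota⁻¹ := by
  rw [pow_add unitIota 2 2]
  ext <;> simp only [coords_mul, coords_inv, coords_unitIota, coords_unitIota_sq]
  · ring
  · ring
  · ring
  · linear_combination -tau_sq / 2

theorem unitIota_pow_five : unitIota ^ 5 = 1 := by
  rw [pow_succ, unitIota_pow_four, inv_mul_cancel]

theorem unitI_mul_unitIota : unitI * unitIota = unitIota ^ 4 * unitI := by
  rw [unitIota_pow_four]
  ext <;> simp only [coords_mul, coords_inv, coords_unitI, coords_unitIota] <;> ring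

theorem unitOmega_mul_unitIota :
    unitOmega * unitIota = unitIota * (unitJ * unitOmega⁻¹) := by
  ext <;> simp only [coords_mul, coords_inv, coords_unitOmega, coords_unitIota, coords_unitJ] <;>
    ring

theorem unitOmega_mul_unitIota_sq :
    unitOmega * unitIota ^ 2 = unitIota ^ 4 * unitJ⁻¹ := by
  rw [unitIota_pow_four]
  ext <;> simp only [coords_mul, coords_inv, coords_unitOmega, coords_unitIota,
    coords_unitIota_sq, coords_unitJ] <;> ring

theorem unitOmega_mul_unitIota_pow_three :
    unitOmega * unitIota ^ 3 = unitIota ^ 2 * unitOmega ^ 2 := by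
  rw [sq unitOmega]
  ext <;> simp only [coords_mul, coords_unitOmega, coords_unitIota_sq,
    coords_unitIota_pow_three] <;> ring

theorem unitOmega_mul_unitIota_pow_four :
    unitOmega * unitIota ^ 4 = unitIota ^ 3 * (unitOmega * unitJ) := by
  rw [unitIota_pow_four]
  ext <;> simp only [coords_mul, coords_inv, coords_unitOmega, coords_unitIota,
    coords_unitIota_pow_three, coords_unitJ] <;> ring

/-- The embedding of the circle group in the group of unit quaternions given by `ℂ ⊆ ℍ`. -/
noncomputable def circleToUnitQuat : Circle →* UnitQuat where
  toFun z := ⟨((z : ℂ) : ℍ[ℝ]), mem_unitSphere_of_sq_sum_eq_one (by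
    simpa [Complex.normSq_apply, sq] using Circle.normSq_coe z)⟩
  map_one' := by ext <;> simp
  map_mul' z w := by ext <;> simp

@[simp] theorem coords_circleToUnitQuat (z : Circle) :
    (circleToUnitQuat z : ℍ[ℝ]).re = (z : ℂ).re ∧ (circleToUnitQuat z : ℍ[ℝ]).imI = (z : ℂ).im ∧
    (circleToUnitQuat z : ℍ[ℝ]).imJ = 0 ∧ (circleToUnitQuat z : ℍ[ℝ]).imK = 0 :=
  ⟨rfl, rfl, rfl, rfl⟩

theorem circleToUnitQuat_injective : Injective circleToUnitQuat := fun z w h => by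
  have hzw : ((z : ℂ) : ℍ[ℝ]) = ((w : ℂ) : ℍ[ℝ]) := congrArg Subtype.val h
  rw [Quaternion.ext_iff] at hzw
  exact Circle.ext (Complex.ext hzw.1 hzw.2.1)

theorem circleToUnitQuat_mul_unitJ (z : Circle) :
    circleToUnitQuat z * unitJ = unitJ * (circleToUnitQuat z)⁻¹ := by
  ext <;> simp only [coords_mul, coords_inv, coords_circleToUnitQuat, coords_unitJ] <;> ring

theorem circleToUnitQuat_exp_pi : circleToUnitQuat (Circle.exp Real.pi) = unitJ ^ 2 := by
  ext <;> simp [Circle.coe_exp, sq]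

theorem unitJ_notMem_range_circleToUnitQuat : unitJ ∉ circleToUnitQuat.range := by
  rintro ⟨z, hz⟩
  simpa using congrArg (fun x : UnitQuat => (x : ℍ[ℝ]).imJ) hz

theorem orderOf_circleExp_two_pi_div {n : ℕ} (hn : n ≠ 0) :
    orderOf (Circle.exp (2 * Real.pi / n)) = n := by
  have hcoe : (Circle.exp (2 * Real.pi / n) : ℂ) =
      Complex.exp (2 * Real.pi * Complex.I / n) := by
    rw [Circle.coe_exp]
    push_cast
    ring_nf
  rw [← orderOf_injective Circle.coeHom Circle.coe_injective]
  exact (hcoe ▸ Complex.isPrimitiveRoot_exp n hn).eq_orderOf.symm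

/-- The root of unity `ζ_n = cos(2π/n) + sin(2π/n) i` as an element of the group of unit
quaternions. -/
noncomputable def unitZeta (n : ℕ) : UnitQuat := circleToUnitQuat (Circle.exp (2 * Real.pi / n))

theorem coe_unitZeta (n : ℕ) : (unitZeta n : ℍ[ℝ]) = zetaQ n := by
  ext <;> simp [unitZeta, zetaQ, Circle.coe_exp, Complex.exp_re, Complex.exp_im]

theorem orderOf_unitZeta {n : ℕ} (hn : n ≠ 0) : orderOf (unitZeta n) = n := by
  rw [unitZeta, orderOf_injective _ circleToUnitQuat_injective, orderOf_circleExp_two_pi_div hn]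

theorem unitZeta_two_mul_pow {n : ℕ} (hn : n ≠ 0) : unitZeta (2 * n) ^ n = unitJ ^ 2 := by
  rw [unitZeta, ← map_pow, ← Circle.exp_natCast_mul, ← circleToUnitQuat_exp_pi]
  congr 2
  push_cast
  field_simp

theorem unitZeta_four : unitZeta 4 = unitI := by
  refine Subtype.ext ((coe_unitZeta 4).trans ?_)
  have hangle : 2 * Real.pi / (4 : ℕ) = Real.pi / 2 := by
    push_cast
    ring
  ext <;> simp only [zetaQ, hangle] <;> simp

theorem cyclicQ_eq_closure (n : ℕ) : CyclicQ n = Subgroup.closure {unitZeta n} := by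
  rw [CyclicQ, setOf_coe_eq (coe_unitZeta n)]

theorem binDihQ_eq_closure (n : ℕ) :
    BinDihQ n = Subgroup.closure {unitJ, unitZeta (2 * n)} := by
  rw [BinDihQ, Set.ofPred_or, setOf_coe_eq (coe_unitZeta (2 * n)),
    setOf_coe_eq (u := unitJ) (z := jQ) rfl, Set.union_comm, Set.singleton_union]

theorem binTetQ_eq_closure : BinTetQ = Subgroup.closure {unitOmega, unitJ, unitI} := by
  rw [BinTetQ, Set.ofPred_or, Set.ofPred_or, setOf_coe_eq (u := unitI) (z := iQ) rfl,
    setOf_coe_eq (u := unitJ) (z := jQ) rfl, setOf_coe_eq (u := unitOmega) (z := omegaQ) rfl]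
  congr 1
  ext
  simp

theorem binTetQ_eq_closure_pair : BinTetQ = Subgroup.closure {unitI, unitOmega} := by
  rw [binTetQ_eq_closure]
  have hI : unitI ∈ Subgroup.closure {unitI, unitOmega} := Subgroup.subset_closure (by simp)
  have hω : unitOmega ∈ Subgroup.closure {unitI, unitOmega} := Subgroup.subset_closure (by simp)
  have hJ : unitJ ∈ Subgroup.closure {unitI, unitOmega} := by
    rw [eq_mul_inv_of_mul_eq unitJ_mul_unitOmega]
    exact mul_mem (mul_mem hω hI) (inv_mem hω)
  refine le_antisymm ((Subgroup.closure_le _).2 ?_) (Subgroup.closure_mono ?_)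
  · rintro _ (rfl | rfl | rfl)
    exacts [hω, hJ, hI]
  · rintro _ (rfl | rfl) <;> simp

theorem unitJ_mem_binTetQ : unitJ ∈ BinTetQ :=
  binTetQ_eq_closure ▸ Subgroup.subset_closure (by simp)

theorem unitI_mem_binTetQ : unitI ∈ BinTetQ :=
  binTetQ_eq_closure ▸ Subgroup.subset_closure (by simp)

theorem unitOmega_mem_binTetQ : unitOmega ∈ BinTetQ :=
  binTetQ_eq_closure ▸ Subgroup.subset_closure (by simp)

theorem closure_binTetQ_union_singleton (x : UnitQuat) :
    Subgroup.closure ((BinTetQ : Set UnitQuat) ∪ {x}) =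
      Subgroup.closure {x, unitI, unitOmega} := by
  rw [binTetQ_eq_closure_pair, Subgroup.closure_union, Subgroup.closure_eq,
    ← Subgroup.closure_union, Set.union_singleton]

theorem binTetQ_le_unitsWithCoordsIn_rat : BinTetQ ≤ unitsWithCoordsIn (Rat.castHom ℝ).range := by
  rw [binTetQ_eq_closure_pair, Subgroup.closure_le]
  have hhalf : (2⁻¹ : ℝ) ∈ (Rat.castHom ℝ).range := ⟨2⁻¹, by simp⟩
  rintro _ (rfl | rfl)
  · simp [mem_unitsWithCoordsIn, zero_mem, one_mem]
  · simpa [mem_unitsWithCoordsIn] using hhalf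

theorem unitOmega_notMem_closure : unitOmega ∉ Subgroup.closure {unitJ, unitI} := by
  have hle : Subgroup.closure {unitJ, unitI} ≤ unitsWithCoordsIn (Int.castRingHom ℝ).range := by
    rw [Subgroup.closure_le]
    rintro _ (rfl | rfl) <;> simp [mem_unitsWithCoordsIn, zero_mem, one_mem]
  intro h
  obtain ⟨m, hm⟩ : (unitOmega : ℍ[ℝ]).re ∈ (Int.castRingHom ℝ).range := (hle h).1
  have hm' : m * 2 = 1 := by
    rw [coords_unitOmega.1, eq_div_iff two_ne_zero, eq_intCast] at hm
    exact_mod_cast hm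
  lia

theorem unitSigma_notMem_binTetQ : unitSigma ∉ BinTetQ := fun h => by
  have hirr : Irrational (√2 / 2) := by simpa using irrational_sqrt_two.div_natCast two_ne_zero
  exact hirr (binTetQ_le_unitsWithCoordsIn_rat h).1

theorem unitIota_notMem_binTetQ : unitIota ∉ BinTetQ := fun h => by
  have hτ : Irrational tau := Real.goldenRatio_irrational
  have hirr : Irrational (tau / 2) := by simpa using hτ.div_natCast two_ne_zero
  exact hirr (binTetQ_le_unitsWithCoordsIn_rat h).2.2.1

theorem card_cyclicQ {n : ℕ} (hn : n ≠ 0) : Nat.card (CyclicQ n) = n := by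
  rw [cyclicQ_eq_closure, ← Subgroup.zpowers_eq_closure, Nat.card_zpowers, orderOf_unitZeta hn]

theorem card_binDihQ {n : ℕ} (hn : n ≠ 0) : Nat.card (BinDihQ n) = 4 * n := by
  have hζ : unitZeta (2 * n) ∈ Subgroup.closure {unitZeta (2 * n)} :=
    Subgroup.mem_closure_singleton_self _
  have hJ_sq : unitJ ^ 2 ∈ Subgroup.closure {unitZeta (2 * n)} :=
    unitZeta_two_mul_pow hn ▸ pow_mem hζ n
  have hJ : unitJ ∉ Subgroup.closure {unitZeta (2 * n)} := fun h =>
    unitJ_notMem_range_circleToUnitQuat ((Subgroup.closure_le _).2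
      (Set.singleton_subset_iff.2 (MonoidHom.mem_range.2 ⟨_, rfl⟩)) h)
  have hcard : Nat.card (Subgroup.closure {unitZeta (2 * n)}) = 2 * n := by
    rw [← cyclicQ_eq_closure, card_cyclicQ (by positivity)]
  rw [binDihQ_eq_closure, card_closure_insert_of_normalizing hJ_sq hJ ?_, hcard]
  · ring
  rintro _ rfl
  exact ⟨_, inv_mem hζ, circleToUnitQuat_mul_unitJ _⟩

theorem card_closure_unitJ_unitI : Nat.card (Subgroup.closure {unitJ, unitI}) = 8 := by
  rw [← unitZeta_four, ← binDihQ_eq_closure 2, card_binDihQ two_ne_zero]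

theorem card_binTetQ : Nat.card BinTetQ = 24 := by
  have hI : unitI ∈ Subgroup.closure {unitJ, unitI} := Subgroup.subset_closure (by simp)
  have hJ : unitJ ∈ Subgroup.closure {unitJ, unitI} := Subgroup.subset_closure (by simp)
  have hω_cubed : unitOmega ^ 3 ∈ Subgroup.closure {unitJ, unitI} :=
    unitOmega_pow_three ▸ pow_mem hJ 2
  rw [binTetQ_eq_closure,
    card_closure_insert_of_normalizing hω_cubed unitOmega_notMem_closure ?_,
    card_closure_unitJ_unitI]
  rintro _ (rfl | rfl)
  exacts [⟨unitI, hI, unitJ_mul_unitOmega⟩, ⟨unitI * unitJ, mul_mem hI hJ, unitI_mul_unitOmega⟩]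

theorem card_binOctQ : Nat.card BinOctQ = 48 := by
  rw [BinOctQ, setOf_coe_eq (u := unitSigma) (z := sigmaQ) rfl, closure_binTetQ_union_singleton,
    card_closure_insert_of_normalizing (p := 2), ← binTetQ_eq_closure_pair, card_binTetQ]
  · rw [← binTetQ_eq_closure_pair, unitSigma_sq]
    exact unitJ_mem_binTetQ
  · rw [← binTetQ_eq_closure_pair]
    exact unitSigma_notMem_binTetQ
  · rw [← binTetQ_eq_closure_pair]
    rintro _ (rfl | rfl)
    · exact ⟨_, mul_mem unitI_mem_binTetQ unitJ_mem_binTetQ, unitI_mul_unitSigma⟩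
    · exact ⟨_, mul_mem unitJ_mem_binTetQ (inv_mem unitOmega_mem_binTetQ), unitOmega_mul_unitSigma⟩

theorem unitI_mul_unitIota_pow (k : ℕ) :
    unitI * unitIota ^ k = unitIota ^ (4 * k) * unitI := by
  rw [pow_mul]
  exact SemiconjBy.pow_right unitI_mul_unitIota k

theorem exists_unitOmega_mul_unitIota_pow_eq {k : ℕ} (hk : k < 5) :
    ∃ l : ℕ, ∃ h ∈ BinTetQ, unitOmega * unitIota ^ k = unitIota ^ l * h := by
  have hJ := unitJ_mem_binTetQ
  have hω := unitOmega_mem_binTetQ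
  interval_cases k
  · exact ⟨0, unitOmega, hω, by simp⟩
  · exact ⟨1, unitJ * unitOmega⁻¹, mul_mem hJ (inv_mem hω), by simpa using unitOmega_mul_unitIota⟩
  · exact ⟨4, unitJ⁻¹, inv_mem hJ, unitOmega_mul_unitIota_sq⟩
  · exact ⟨2, unitOmega ^ 2, pow_mem hω 2, unitOmega_mul_unitIota_pow_three⟩
  · exact ⟨3, unitOmega * unitJ, mul_mem hω hJ, unitOmega_mul_unitIota_pow_four⟩

theorem card_binIcoQ : Nat.card BinIcoQ = 120 := by
  have : Fact (Nat.Prime 5) := ⟨by norm_num⟩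
  rw [BinIcoQ, setOf_coe_eq (u := unitIota) (z := iotaQ) rfl, closure_binTetQ_union_singleton,
    card_closure_insert_of_prime (p := 5), ← binTetQ_eq_closure_pair, card_binTetQ]
  · rw [unitIota_pow_five]
    exact one_mem _
  · rw [← binTetQ_eq_closure_pair]
    exact unitIota_notMem_binTetQ
  · rw [← binTetQ_eq_closure_pair]
    rintro _ (rfl | rfl) k hk
    · exact ⟨4 * k, unitI, unitI_mem_binTetQ, unitI_mul_unitIota_pow k⟩
    · exact exists_unitOmega_mul_unitIota_pow_eq hk

end UnitQuaternions

/-- The subgroups of the unit quaternion group have the expected orders: `C_n` has `n`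
elements (`n ≥ 1`), the binary dihedral group `D*₄ₙ` has `4n` elements (`n ≥ 2`), the
binary tetrahedral group `T*` has `24` elements, the binary octahedral group `O*` has
`48` elements, and the binary icosahedral group `I*` has `120` elements. -/
theorem stmt17 :
    (∀ n : ℕ, 1 ≤ n → Nat.card (CyclicQ n) = n) ∧
    (∀ n : ℕ, 2 ≤ n → Nat.card (BinDihQ n) = 4 * n) ∧
    Nat.card BinTetQ = 24 ∧ Nat.card BinOctQ = 48 ∧ Nat.card BinIcoQ = 120 :=
  ⟨fun _ hn => card_cyclicQ (by lia), fun _ hn => card_binDihQ (by lia),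
    card_binTetQ, card_binOctQ, card_binIcoQ⟩
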